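/- Let k > 0, \lambda > 0, \gamma > 0 and x > 0 be fixed. Then the function \nu \mapsto \mathcal{I}_{k,\nu}^{\gamma,\lambda}(x) := \Gamma_k(\nu+1)\,\mathtt{I}_{k,\nu}^{\gamma,\lambda}(x) is log-convex on (0, \infty), i.e., \nu \mapsto \log\big(\Gamma_k(\nu+1)\,\mathtt{I}_{k,\nu}^{\gamma,\lambda}(x)\big) is convex on (0,\infty). -/

import Mathlib

/-- The k-gamma function `Γ_k(x) = k^(x/k - 1) Γ(x/k)`. -/
noncomputable def kGamma (k x : ℝ) : ℝ := k ^ (x / k - 1) * Real.Gamma (x / k)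

/-- The k-Pochhammer symbol `(x)_{n,k} = ∏_{j=0}^{n-1} (x + j k)`. -/
noncomputable def kPoch (x k : ℝ) (n : ℕ) : ℝ := ∏ j ∈ Finset.range n, (x + (j : ℝ) * k)

/-- The modified k-Bessel function of the first kind. -/
noncomputable def kBesselI (k ν γ lam x : ℝ) : ℝ :=
  ∑' n : ℕ, kPoch γ k n / (kGamma k (lam * n + ν + 1) * ((n.factorial : ℝ)) ^ 2) * (x / 2) ^ n

/-- The k-confluent hypergeometric function `Φ_k(a; c; x)`. -/
noncomputable def kPhi (k a c x : ℝ) : ℝ :=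
  ∑' n : ℕ, kPoch a k n / (kPoch c k n * (n.factorial : ℝ)) * x ^ n

/-- The k-digamma function `Ψ_k`. -/
noncomputable def kPsi (k t : ℝ) : ℝ :=
  (Real.log k - Real.eulerMascheroniConstant) / k - 1 / t +
    ∑' n : ℕ, t / (((n : ℝ) + 1) * k * (((n : ℝ) + 1) * k + t))

/-!
Log-convex functions are closed under nonnegative multiples, products, sums, series (Hölder's
inequality) and pointwise limits, so everything reduces to the log-convexity of `s ↦ s⁻¹`, which is
the weighted AM-GM inequality. Indeed, Euler's limit formula gives
`Γ(s) / Γ(s + h) = lim n^(-h) ∏_{j ≤ n} (1 + h / (s + j))`, so this ratio is log-convex in `s` for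
`h ≥ 0`, and `Γ_k(ν + 1) I_{k,ν}(x)` is a series of nonnegative multiples of such ratios.
-/

open Set Filter Topology

section LogConvexOn

variable {E F ι : Type*} [AddCommGroup E] [Module ℝ E] [AddCommGroup F] [Module ℝ F]
  {s t : Set E} {f g : E → ℝ}

/-- Log-convexity in multiplicative form, which also allows functions with zeros. For positive
functions it amounts to the convexity of `log ∘ f`. -/
structure LogConvexOn (s : Set E) (f : E → ℝ) : Prop where
  convex : Convex ℝ s
  nonneg : ∀ ⦃x⦄, x ∈ s → 0 ≤ f x
  map_combo_le : ∀ ⦃x⦄, x ∈ s → ∀ ⦃y⦄, y ∈ s → ∀ ⦃a b : ℝ⦄, 0 < a → 0 < b → a + b = 1 →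
    f (a • x + b • y) ≤ f x ^ a * f y ^ b

namespace LogConvexOn

theorem convexOn_log (hf : LogConvexOn s f) (hpos : ∀ x ∈ s, 0 < f x) :
    ConvexOn ℝ s (fun x => Real.log (f x)) := by
  refine convexOn_iff_forall_pos.2 ⟨hf.convex, fun x hx y hy a b ha hb hab => ?_⟩
  have hx_pos := hpos x hx
  have hy_pos := hpos y hy
  calc Real.log (f (a • x + b • y))
      ≤ Real.log (f x ^ a * f y ^ b) :=
        Real.log_le_log (hpos _ (hf.convex hx hy ha.le hb.le hab))
          (hf.map_combo_le hx hy ha hb hab)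
    _ = a • Real.log (f x) + b • Real.log (f y) := by
        rw [Real.log_mul (by positivity) (by positivity), Real.log_rpow hx_pos,
          Real.log_rpow hy_pos, smul_eq_mul, smul_eq_mul]

theorem subset (hf : LogConvexOn t f) (hst : s ⊆ t) (hs : Convex ℝ s) : LogConvexOn s f where
  convex := hs
  nonneg _ hx := hf.nonneg (hst hx)
  map_combo_le _ hx _ hy := hf.map_combo_le (hst hx) (hst hy)

theorem congr (hf : LogConvexOn s f) (hfg : EqOn f g s) : LogConvexOn s g where
  convex := hf.convex
  nonneg x hx := hfg hx ▸ hf.nonneg hx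
  map_combo_le x hx y hy a b ha hb hab := by
    rw [← hfg hx, ← hfg hy, ← hfg (hf.convex hx hy ha.le hb.le hab)]
    exact hf.map_combo_le hx hy ha hb hab

theorem comp_affineMap {s : Set F} {f : F → ℝ} (hf : LogConvexOn s f) (A : E →ᵃ[ℝ] F) :
    LogConvexOn (A ⁻¹' s) (f ∘ A) where
  convex := hf.convex.affine_preimage A
  nonneg _ hx := hf.nonneg hx
  map_combo_le x hx y hy a b ha hb hab := by
    rw [Function.comp_apply, Convex.combo_affine_apply hab]
    exact hf.map_combo_le hx hy ha hb hab

theorem comp_add_const (hf : LogConvexOn s f) (c : E) :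
    LogConvexOn ((· + c) ⁻¹' s) (fun x => f (x + c)) :=
  hf.comp_affineMap (AffineMap.id ℝ E + AffineMap.const ℝ E c)

theorem const (hs : Convex ℝ s) {c : ℝ} (hc : 0 ≤ c) : LogConvexOn s (fun _ => c) where
  convex := hs
  nonneg _ _ := hc
  map_combo_le x _ y _ a b ha hb hab := by
    rw [← Real.rpow_add_of_nonneg hc ha.le hb.le, hab, Real.rpow_one]

theorem mul (hf : LogConvexOn s f) (hg : LogConvexOn s g) : LogConvexOn s (fun x => f x * g x) where
  convex := hf.convex
  nonneg _ hx := mul_nonneg (hf.nonneg hx) (hg.nonneg hx)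
  map_combo_le x hx y hy a b ha hb hab := by
    have hz := hf.convex hx hy ha.le hb.le hab
    calc f (a • x + b • y) * g (a • x + b • y)
        ≤ (f x ^ a * f y ^ b) * (g x ^ a * g y ^ b) :=
          mul_le_mul (hf.map_combo_le hx hy ha hb hab) (hg.map_combo_le hx hy ha hb hab)
            (hg.nonneg hz) ((hf.nonneg hz).trans (hf.map_combo_le hx hy ha hb hab))
      _ = (f x * g x) ^ a * (f y * g y) ^ b := by
          rw [Real.mul_rpow (hf.nonneg hx) (hg.nonneg hx),
            Real.mul_rpow (hf.nonneg hy) (hg.nonneg hy), mul_mul_mul_comm]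

theorem const_mul (hf : LogConvexOn s f) {c : ℝ} (hc : 0 ≤ c) :
    LogConvexOn s (fun x => c * f x) :=
  (const hf.convex hc).mul hf

theorem finset_prod {f : ι → E → ℝ} (hs : Convex ℝ s) (u : Finset ι)
    (hf : ∀ i ∈ u, LogConvexOn s (f i)) : LogConvexOn s (fun x => ∏ i ∈ u, f i x) := by
  induction u using Finset.cons_induction with
  | empty => simpa only [Finset.prod_empty] using const hs zero_le_one
  | cons i u hi ih =>
    simp only [Finset.prod_cons]
    rw [Finset.forall_mem_cons] at hf
    exact hf.1.mul (ih hf.2)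

theorem tsum {f : ι → E → ℝ} (hs : Convex ℝ s) (hf : ∀ i, LogConvexOn s (f i))
    (hsum : ∀ x ∈ s, Summable (fun i => f i x)) : LogConvexOn s (fun x => ∑' i, f i x) where
  convex := hs
  nonneg _ hx := tsum_nonneg fun i => (hf i).nonneg hx
  map_combo_le x hx y hy a b ha hb hab := by
    have rpow_rpow_inv_cancel {z : E} (hz : z ∈ s) {c : ℝ} (hc : 0 < c) (i : ι) :
        (f i z ^ c) ^ c⁻¹ = f i z := Real.rpow_rpow_inv ((hf i).nonneg hz) hc.ne'
    obtain ⟨summable_mul, holder⟩ := Real.summable_and_inner_le_Lp_mul_Lq_tsum_of_nonneg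
      (Real.HolderConjugate.inv_inv ha hb hab)
      (fun i => Real.rpow_nonneg ((hf i).nonneg hx) a)
      (fun i => Real.rpow_nonneg ((hf i).nonneg hy) b)
      (by simpa only [rpow_rpow_inv_cancel hx ha] using hsum x hx)
      (by simpa only [rpow_rpow_inv_cancel hy hb] using hsum y hy)
    simp only [rpow_rpow_inv_cancel hx ha, rpow_rpow_inv_cancel hy hb, one_div, inv_inv] at holder
    have hz := hs hx hy ha.le hb.le hab
    exact ((hsum _ hz).tsum_le_tsum (fun i => (hf i).map_combo_le hx hy ha hb hab)
      summable_mul).trans holder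

theorem add (hf : LogConvexOn s f) (hg : LogConvexOn s g) :
    LogConvexOn s (fun x => f x + g x) := by
  have h := tsum (f := fun i : Bool => cond i f g) hf.convex (Bool.forall_bool.2 ⟨hg, hf⟩)
    fun _ _ => Summable.of_finite
  simpa only [tsum_fintype, Fintype.sum_bool, cond_true, cond_false] using h

theorem of_tendsto {l : Filter ι} [l.NeBot] {φ : ι → E → ℝ}
    (hφ : ∀ᶠ i in l, LogConvexOn s (φ i))
    (hlim : ∀ x ∈ s, Tendsto (fun i => φ i x) l (𝓝 (f x))) : LogConvexOn s f where
  convex := hφ.exists.choose_spec.convex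
  nonneg x hx := ge_of_tendsto (hlim x hx) (hφ.mono fun _ h => h.nonneg hx)
  map_combo_le x hx y hy a b ha hb hab := by
    have hz := hφ.exists.choose_spec.convex hx hy ha.le hb.le hab
    exact le_of_tendsto_of_tendsto (hlim _ hz)
      (((hlim x hx).rpow_const (.inr ha.le)).mul ((hlim y hy).rpow_const (.inr hb.le)))
      (hφ.mono fun _ h => h.map_combo_le hx hy ha hb hab)

end LogConvexOn

end LogConvexOn

theorem logConvexOn_inv : LogConvexOn (Ioi 0) (fun s : ℝ => s⁻¹) where
  convex := convex_Ioi 0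
  nonneg _ hs := inv_nonneg.2 (le_of_lt hs)
  map_combo_le s hs t ht a b ha hb hab := by
    rw [mem_Ioi] at hs ht
    rw [Real.inv_rpow hs.le, Real.inv_rpow ht.le, ← mul_inv]
    exact inv_anti₀ (by positivity)
      (Real.geom_mean_le_arith_mean2_weighted ha.le hb.le hs.le ht.le hab)

theorem logConvexOn_one_add_div {h c : ℝ} (hh : 0 ≤ h) (hc : 0 ≤ c) :
    LogConvexOn (Ioi 0) (fun s : ℝ => 1 + h / (s + c)) := by
  have shifted_inv : LogConvexOn (Ioi 0) (fun s : ℝ => (s + c)⁻¹) :=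
    (logConvexOn_inv.comp_add_const c).subset
      (fun _ hs => add_pos_of_pos_of_nonneg hs hc) (convex_Ioi 0)
  simpa only [div_eq_mul_inv] using
    (LogConvexOn.const (convex_Ioi 0) zero_le_one).add (shifted_inv.const_mul hh)

theorem gammaSeq_div_gammaSeq_add {s h : ℝ} (hs : 0 < s) (hh : 0 ≤ h) {n : ℕ} (hn : n ≠ 0) :
    Real.GammaSeq s n / Real.GammaSeq (s + h) n =
      (n : ℝ) ^ (-h) * ∏ j ∈ Finset.range (n + 1), (1 + h / (s + j)) := by
  have hn_pos : (0 : ℝ) < n := by positivity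
  have factor (j : ℕ) : 1 + h / (s + j) = (s + h + j) / (s + j) := by
    field_simp
    ring
  have prod_pos {z : ℝ} (hz : 0 < z) : 0 < ∏ j ∈ Finset.range (n + 1), (z + j) :=
    Finset.prod_pos fun j _ => by positivity
  have hprod := (prod_pos hs).ne'
  have hprod_add := (prod_pos (add_pos_of_pos_of_nonneg hs hh)).ne'
  simp only [factor, Finset.prod_div_distrib, Real.GammaSeq, Real.rpow_add hn_pos,
    Real.rpow_neg hn_pos.le]
  field_simp

theorem logConvexOn_gamma_div_gamma_add {h : ℝ} (hh : 0 ≤ h) :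
    LogConvexOn (Ioi 0) (fun s => Real.Gamma s / Real.Gamma (s + h)) := by
  refine LogConvexOn.of_tendsto (l := atTop)
    (φ := fun n s => Real.GammaSeq s n / Real.GammaSeq (s + h) n) ?_ fun s hs => ?_
  · filter_upwards [eventually_ne_atTop 0] with n hn
    have product_logConvexOn := LogConvexOn.finset_prod (convex_Ioi 0) (Finset.range (n + 1))
      fun j _ => logConvexOn_one_add_div hh j.cast_nonneg
    exact (product_logConvexOn.const_mul (by positivity)).congr
      fun s hs => (gammaSeq_div_gammaSeq_add hs hh hn).symm
  · exact (Real.GammaSeq_tendsto_Gamma s).div (Real.GammaSeq_tendsto_Gamma (s + h))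
      (Real.Gamma_pos_of_pos (add_pos_of_pos_of_nonneg hs hh)).ne'

theorem kGamma_pos {k y : ℝ} (hk : 0 < k) (hy : 0 < y) : 0 < kGamma k y :=
  mul_pos (Real.rpow_pos_of_pos hk _) (Real.Gamma_pos_of_pos (div_pos hy hk))

theorem kGamma_add {k : ℝ} (hk : 0 < k) (y h : ℝ) :
    kGamma k (y + h) = k ^ (h / k) * (k ^ (y / k - 1) * Real.Gamma (y / k + h / k)) := by
  rw [kGamma, ← mul_assoc, ← Real.rpow_add hk, add_div]
  ring_nf

theorem logConvexOn_kGamma_div_kGamma_add {k h : ℝ} (hk : 0 < k) (hh : 0 ≤ h) :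
    LogConvexOn (Ioi 0) (fun y => kGamma k y / kGamma k (y + h)) := by
  have scaled_ratio : LogConvexOn (Ioi 0)
      (fun y : ℝ => Real.Gamma (y / k) / Real.Gamma (y / k + h / k)) := by
    have hcomp := (logConvexOn_gamma_div_gamma_add (div_nonneg hh hk.le)).comp_affineMap
      (k⁻¹ • LinearMap.id : ℝ →ₗ[ℝ] ℝ).toAffineMap
    refine (hcomp.subset (fun y hy => ?_) (convex_Ioi 0)).congr fun y _ => ?_
    · simpa [hk] using hy
    · simp [div_eq_inv_mul]
  refine (scaled_ratio.const_mul (c := (k ^ (h / k))⁻¹) (by positivity)).congr fun y _ => ?_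
  have := Real.rpow_pos_of_pos hk (y / k - 1)
  simp only [kGamma_add hk]
  rw [kGamma]
  field_simp

theorem kPoch_nonneg {k c : ℝ} (hk : 0 ≤ k) (hc : 0 ≤ c) (n : ℕ) : 0 ≤ kPoch c k n :=
  Finset.prod_nonneg fun _ _ => by positivity

theorem abs_kPoch_le (c k : ℝ) (n : ℕ) : |kPoch c k n| ≤ (|c| + |k|) ^ n * n.factorial := by
  have factor_le (j : ℕ) : |c + j * k| ≤ (|c| + |k|) * (j + 1 : ℕ) := by
    calc |c + j * k| ≤ |c| + j * |k| := by simpa [abs_mul] using abs_add_le c (j * k)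
      _ ≤ (|c| + |k|) * (j + 1 : ℕ) := by
        push_cast
        nlinarith [abs_nonneg k, mul_nonneg (abs_nonneg c) j.cast_nonneg]
  calc |kPoch c k n| = ∏ j ∈ Finset.range n, |c + j * k| := Finset.abs_prod _ _
    _ ≤ ∏ j ∈ Finset.range n, ((|c| + |k|) * (j + 1 : ℕ)) :=
      Finset.prod_le_prod (fun _ _ => abs_nonneg _) fun j _ => factor_le j
    _ = (|c| + |k|) ^ n * n.factorial := by
      rw [Finset.prod_mul_distrib, Finset.prod_const, Finset.card_range, ← Nat.cast_prod,
        Finset.prod_range_add_one_eq_factorial]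

theorem exists_pos_le_gamma : ∃ m : ℝ, 0 < m ∧ ∀ y : ℝ, 0 < y → m ≤ Real.Gamma y := by
  obtain ⟨z, hz, hmin⟩ := Real.exists_isMinOn_Gamma_Ioi
  exact ⟨Real.Gamma z, Real.Gamma_pos_of_pos (by linarith [hz.1]), fun _ hy => hmin hy⟩

theorem exists_mul_pow_le_kGamma {k lam y : ℝ} (hk : 0 < k) (hlam : 0 ≤ lam) (hy : 0 < y) :
    ∃ A B : ℝ, 0 < A ∧ 0 < B ∧ ∀ n : ℕ, A * B ^ n ≤ kGamma k (y + lam * n) := by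
  obtain ⟨m, hm_pos, hm⟩ := exists_pos_le_gamma
  refine ⟨k ^ (y / k - 1) * m, k ^ (lam / k), by positivity, by positivity, fun n => ?_⟩
  have hgamma : m ≤ Real.Gamma (y / k + lam * n / k) := hm _ (by positivity)
  calc k ^ (y / k - 1) * m * (k ^ (lam / k)) ^ n
      = k ^ (lam * n / k) * (k ^ (y / k - 1) * m) := by
        rw [← Real.rpow_mul_natCast hk.le, div_mul_eq_mul_div, mul_comm]
    _ ≤ k ^ (lam * n / k) * (k ^ (y / k - 1) * Real.Gamma (y / k + lam * n / k)) := by gcongr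
    _ = kGamma k (y + lam * n) := (kGamma_add hk y (lam * n)).symm

/-- The `n`-th summand of the series that defines `kBesselI k ν γ lam x`. -/
noncomputable def kBesselITerm (k ν γ lam x : ℝ) (n : ℕ) : ℝ :=
  kPoch γ k n / (kGamma k (lam * n + ν + 1) * (n.factorial : ℝ) ^ 2) * (x / 2) ^ n

section kBesselITerm

variable {k lam γ x ν : ℝ}

theorem summable_kBesselITerm (hk : 0 < k) (hlam : 0 ≤ lam) (hν : -1 < ν) (γ x : ℝ) :
    Summable (kBesselITerm k ν γ lam x) := by
  obtain ⟨A, B, hA, hB, hAB⟩ := exists_mul_pow_le_kGamma hk hlam (neg_lt_iff_pos_add.1 hν)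
  refine ((Real.summable_pow_div_factorial ((|γ| + |k|) * |x / 2| / B)).mul_left
    A⁻¹).of_norm_bounded fun n => ?_
  have hkGamma : A * B ^ n ≤ kGamma k (lam * n + ν + 1) := by
    simpa only [add_comm, add_left_comm, add_assoc] using hAB n
  have hkGamma_pos : 0 < kGamma k (lam * n + ν + 1) := hkGamma.trans_lt' (by positivity)
  calc ‖kBesselITerm k ν γ lam x n‖
      = |kPoch γ k n| / (kGamma k (lam * n + ν + 1) * (n.factorial : ℝ) ^ 2) * |x / 2| ^ n := by
        rw [kBesselITerm, Real.norm_eq_abs, abs_mul, abs_div, abs_pow,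
          abs_of_pos (mul_pos hkGamma_pos (by positivity))]
    _ ≤ (|γ| + |k|) ^ n * n.factorial / (A * B ^ n * (n.factorial : ℝ) ^ 2) * |x / 2| ^ n := by
        gcongr
        exact abs_kPoch_le γ k n
    _ = A⁻¹ * (((|γ| + |k|) * |x / 2| / B) ^ n / n.factorial) := by
        rw [div_pow, mul_pow]
        field_simp

theorem kBesselITerm_nonneg (hk : 0 < k) (hlam : 0 ≤ lam) (hγ : 0 ≤ γ) (hx : 0 ≤ x) (hν : -1 < ν)
    (n : ℕ) : 0 ≤ kBesselITerm k ν γ lam x n := by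
  have hν' : 0 < ν + 1 := neg_lt_iff_pos_add.1 hν
  have hkPoch := kPoch_nonneg hk.le hγ n
  have hkGamma : 0 < kGamma k (lam * n + ν + 1) := kGamma_pos hk (by rw [add_assoc]; positivity)
  unfold kBesselITerm
  positivity

theorem kBesselI_pos (hk : 0 < k) (hlam : 0 ≤ lam) (hγ : 0 ≤ γ) (hx : 0 ≤ x) (hν : -1 < ν) :
    0 < kBesselI k ν γ lam x := by
  have leading_term_pos : 0 < kBesselITerm k ν γ lam x 0 := by
    simpa [kBesselITerm, kPoch] using kGamma_pos hk (neg_lt_iff_pos_add.1 hν)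
  exact (summable_kBesselITerm hk hlam hν γ x).tsum_pos
    (kBesselITerm_nonneg hk hlam hγ hx hν) 0 leading_term_pos

theorem logConvexOn_kGamma_mul_kBesselITerm (hk : 0 < k) (hlam : 0 ≤ lam) (hγ : 0 ≤ γ)
    (hx : 0 ≤ x) (n : ℕ) :
    LogConvexOn (Ioi (-1)) (fun ν => kGamma k (ν + 1) * kBesselITerm k ν γ lam x n) := by
  have shifted_ratio : LogConvexOn (Ioi (-1))
      (fun ν => kGamma k (ν + 1) / kGamma k (ν + 1 + lam * n)) :=
    ((logConvexOn_kGamma_div_kGamma_add hk (mul_nonneg hlam n.cast_nonneg)).comp_add_const 1).subset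
      (fun _ hν => mem_Ioi.2 (neg_lt_iff_pos_add.1 (mem_Ioi.1 hν))) (convex_Ioi (-1))
  have coeff_nonneg : 0 ≤ kPoch γ k n / (n.factorial : ℝ) ^ 2 * (x / 2) ^ n := by
    have := kPoch_nonneg hk.le hγ n
    positivity
  refine (shifted_ratio.const_mul coeff_nonneg).congr fun ν _ => ?_
  simp only [kBesselITerm]
  rw [show lam * n + ν + 1 = ν + 1 + lam * n by ring]
  ring

theorem logConvexOn_kGamma_mul_kBesselI (hk : 0 < k) (hlam : 0 ≤ lam) (hγ : 0 ≤ γ) (hx : 0 ≤ x) :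
    LogConvexOn (Ioi (-1)) (fun ν => kGamma k (ν + 1) * kBesselI k ν γ lam x) := by
  have series_logConvexOn := LogConvexOn.tsum (convex_Ioi (-1))
    (logConvexOn_kGamma_mul_kBesselITerm hk hlam hγ hx)
    fun ν hν => (summable_kBesselITerm hk hlam hν γ x).mul_left (kGamma k (ν + 1))
  exact series_logConvexOn.congr fun _ _ => tsum_mul_left

end kBesselITerm

theorem kBesselI_logConvex_in_order_general
    {k lam γ x : ℝ} (hk : 0 < k) (hlam : 0 ≤ lam) (hγ : 0 ≤ γ) (hx : 0 ≤ x) :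
    ConvexOn ℝ (Ioi (-1)) (fun ν => Real.log (kGamma k (ν + 1) * kBesselI k ν γ lam x)) :=
  (logConvexOn_kGamma_mul_kBesselI hk hlam hγ hx).convexOn_log fun _ hν =>
    mul_pos (kGamma_pos hk (neg_lt_iff_pos_add.1 hν)) (kBesselI_pos hk hlam hγ hx hν)

/-- log-convexity in the order ν of `Γ_k(ν+1) I_{k,ν}^{γ,λ}(x)`. -/
theorem kBesselI_logConvex_in_order
    (k lam γ x : ℝ) (hk : 0 < k) (hlam : 0 < lam) (hγ : 0 < γ) (hx : 0 < x) :
    ConvexOn ℝ (Set.Ioi 0)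
      (fun ν => Real.log (kGamma k (ν + 1) * kBesselI k ν γ lam x)) :=
  (kBesselI_logConvex_in_order_general hk hlam.le hγ.le hx.le).subset
    (Ioi_subset_Ioi neg_one_lt_zero.le) (convex_Ioi 0)
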